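/- Let 0 < α ≤ 1, a ≤ ã < T, let f : [a,T] × ℝ → ℝ be continuous, bounded by M, and L-Lipschitz in the second variable. Let y and ỹ be continuous solutions on [a,T] and [ã,T] respectively of the Volterra equations y(t) = y₀ + (1/Γ(α)) ∫_a^t (t-s)^{α-1} f(s, y(s)) ds and ỹ(t) = y₀ + (1/Γ(α)) ∫_{ã}^t (t-s)^{α-1} f(s, ỹ(s)) ds. Then sup_{t ∈ [ã,T]} |y(t) - ỹ(t)| ≤ (M/Γ(α+1)) (ã - a)^α · E_α(L (T - a)^α). -/

import Mathlib

/-!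
Subtracting the two Volterra equations leaves, on `[ã, T]`, the memory term
`(1/Γ(α)) ∫_a^ã (t-s)^(α-1) f(s, y(s)) ds` and the integral over `[ã, t]` of the kernel against
`f(s, y(s)) - f(s, ỹ(s))`. The memory term is at most
`(M/Γ(α+1)) ((t-a)^α - (t-ã)^α) ≤ (M/Γ(α+1)) (ã-a)^α`, by subadditivity of `x ↦ x^α` for `α ≤ 1`.
By the Lipschitz condition, `e = |y - ỹ|` then satisfies `e ≤ C + L · I e`, where `I` is the
Riemann–Liouville integral of order `α` based at `ã`.

The fractional Gronwall inequality `fractional_gronwall` is obtained by iteration. The Beta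
integral `integral_kernel_mul_pow` says that `I` maps `(s-ã)^(αk)/Γ(αk+1)` to
`(t-ã)^(α(k+1))/Γ(α(k+1)+1)`. Hence `n` iterations, started from a constant bound `B` of `e`, give
`C` times a partial sum of the Mittag-Leffler series plus `B` times its `n`-th term. This term
vanishes in the limit because the series converges, which follows from the growth bound
`Γ(x+1) ≥ R^x e^(-R)` for every `R > 0`.
-/

noncomputable def mittagLeffler (α z : ℝ) : ℝ := ∑' k : ℕ, z ^ k / Real.Gamma (α * k + 1)

open Set MeasureTheory intervalIntegral Filter Topology

/-- Restricting Euler's integral to `(R, ∞)`, where `u ^ x ≥ R ^ x`, shows that `Γ` outgrows every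
exponential. -/
lemma rpow_mul_exp_neg_le_Gamma {x R : ℝ} (hx : 0 ≤ x) (hR : 0 < R) :
    R ^ x * Real.exp (-R) ≤ Real.Gamma (x + 1) := by
  have hint := Real.GammaIntegral_convergent (s := x + 1) (by linarith)
  rw [Real.Gamma_eq_integral (by linarith), ← integral_exp_neg_Ioi R, ← MeasureTheory.integral_const_mul]
  have hsub : Ioi R ⊆ Ioi (0 : ℝ) := Ioi_subset_Ioi hR.le
  calc ∫ u in Ioi R, R ^ x * Real.exp (-u)
      ≤ ∫ u in Ioi R, Real.exp (-u) * u ^ (x + 1 - 1) := by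
        refine setIntegral_mono_on ((integrableOn_exp_neg_Ioi R).const_mul _)
          (hint.mono_set hsub) measurableSet_Ioi fun u hu => ?_
        rw [add_sub_cancel_right, mul_comm]
        gcongr
        exact (mem_Ioi.1 hu).le
    _ ≤ _ := by
        refine setIntegral_mono_set hint ?_ (ae_of_all _ hsub)
        filter_upwards [ae_restrict_mem measurableSet_Ioi] with u hu
        have : (0 : ℝ) < u := hu
        simp only [Pi.zero_apply]
        positivity

lemma summable_mittagLeffler {α z : ℝ} (hα : 0 < α) (hz : 0 ≤ z) :
    Summable fun k : ℕ => z ^ k / Real.Gamma (α * k + 1) := by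
  -- `R` is chosen so that `R ^ α = z + 1`; the series is then dominated by a geometric one.
  set R : ℝ := (z + 1) ^ α⁻¹ with hRdef
  have hR : 0 < R := by positivity
  have hRα : R ^ α = z + 1 := Real.rpow_inv_rpow (by linarith) hα.ne'
  have hgeo : Summable fun k : ℕ => Real.exp R * (z / (z + 1)) ^ k :=
    (summable_geometric_of_lt_one (by positivity)
      ((div_lt_one (by linarith)).2 (by linarith))).mul_left _
  refine Summable.of_nonneg_of_le (fun k => ?_) (fun k => ?_) hgeo
  · have := Real.Gamma_pos_of_pos (s := α * k + 1) (by positivity)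
    positivity
  · have h := rpow_mul_exp_neg_le_Gamma (x := α * k) (by positivity) hR
    rw [Real.rpow_mul hR.le, hRα, Real.rpow_natCast] at h
    calc z ^ k / Real.Gamma (α * k + 1) ≤ z ^ k / ((z + 1) ^ k * Real.exp (-R)) := by gcongr
      _ = Real.exp R * (z / (z + 1)) ^ k := by
        rw [Real.exp_neg, div_pow]
        field_simp

lemma mittagLeffler_mono {α z w : ℝ} (hα : 0 < α) (hz : 0 ≤ z) (hzw : z ≤ w) :
    mittagLeffler α z ≤ mittagLeffler α w := by
  refine (summable_mittagLeffler hα hz).tsum_le_tsum (fun k => ?_)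
    (summable_mittagLeffler hα (hz.trans hzw))
  have := Real.Gamma_pos_of_pos (s := α * k + 1) (by positivity)
  gcongr

lemma intervalIntegrable_kernel {α : ℝ} (hα : 0 < α) (t c d : ℝ) :
    IntervalIntegrable (fun s => (t - s) ^ (α - 1)) volume c d := by
  have := (intervalIntegrable_rpow' (a := t - c) (b := t - d) (r := α - 1) (by linarith)).comp_sub_left t
  simpa using this

lemma intervalIntegrable_kernel_mul {α : ℝ} (hα : 0 < α) (t : ℝ) {c d : ℝ} (hcd : c ≤ d)
    {g : ℝ → ℝ} (hg : ContinuousOn g (Icc c d)) :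
    IntervalIntegrable (fun s => (t - s) ^ (α - 1) * g s) volume c d :=
  (intervalIntegrable_kernel hα t c d).mul_continuousOn (by rwa [uIcc_of_le hcd])

lemma integral_kernel {α : ℝ} (hα : 0 < α) (t c d : ℝ) :
    ∫ s in c..d, (t - s) ^ (α - 1) = ((t - c) ^ α - (t - d) ^ α) / α := by
  rw [integral_comp_sub_left (fun u => u ^ (α - 1)), integral_rpow (Or.inl (by linarith))]
  simp

/-- The Beta integral, in the form that makes the Riemann–Liouville integral act as a shift on the
terms of the Mittag-Leffler series. -/
lemma integral_kernel_mul_pow {α : ℝ} (hα : 0 < α) {c t : ℝ} (hct : c ≤ t) (k : ℕ) :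
    ∫ s in c..t, (t - s) ^ (α - 1) * ((s - c) ^ α) ^ k
      = Real.Gamma α * Real.Gamma (α * k + 1) / Real.Gamma (α * (k + 1 : ℕ) + 1)
        * ((t - c) ^ α) ^ (k + 1) := by
  rcases hct.eq_or_lt with rfl | hlt
  · simp [Real.zero_rpow hα.ne']
  set x := t - c with hx
  have hxpos : 0 < x := sub_pos.2 hlt
  have hβ : 0 < α * k + 1 := by positivity
  have hshift : ∫ s in c..t, (t - s) ^ (α - 1) * ((s - c) ^ α) ^ k
      = ∫ u in (0 : ℝ)..x, (x - u) ^ (α - 1) * (u ^ α) ^ k := by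
    have := integral_comp_sub_right (a := c) (b := t)
      (fun u => (x - u) ^ (α - 1) * (u ^ α) ^ k) c
    rw [sub_self] at this
    rw [hx, ← this]
    congr 1
    ext s
    rw [show x - (s - c) = t - s by rw [hx]; ring]
  rw [hshift]
  have hC := Complex.betaIntegral_scaled ((α * k + 1 : ℝ) : ℂ) (α : ℂ) hxpos
  have hL : (∫ u in (0 : ℝ)..x, (u : ℂ) ^ (((α * k + 1 : ℝ) : ℂ) - 1) * ((x : ℂ) - u) ^ ((α : ℂ) - 1))
      = ((∫ u in (0 : ℝ)..x, (x - u) ^ (α - 1) * (u ^ α) ^ k : ℝ) : ℂ) := by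
    rw [← intervalIntegral.integral_ofReal]
    refine intervalIntegral.integral_congr fun u hu => ?_
    rw [uIcc_of_le hxpos.le] at hu
    have e1 : (((α * k + 1 : ℝ) : ℂ) - 1) = ((α * k : ℝ) : ℂ) := by push_cast; ring
    have e2 : ((α : ℂ) - 1) = ((α - 1 : ℝ) : ℂ) := by push_cast; ring
    rw [e1, e2, ← Complex.ofReal_sub, ← Complex.ofReal_cpow hu.1,
      ← Complex.ofReal_cpow (sub_nonneg.2 hu.2), ← Complex.ofReal_mul, Real.rpow_mul hu.1,
      Real.rpow_natCast, mul_comm]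
  have e3 : (((α * k + 1 : ℝ) : ℂ) + (α : ℂ) - 1) = ((α * (k + 1 : ℕ) : ℝ) : ℂ) := by
    push_cast; ring
  rw [hL, e3, ← Complex.ofReal_cpow hxpos.le] at hC
  have hre := congrArg Complex.re hC
  rw [Complex.ofReal_re, Complex.re_ofReal_mul, ← ProbabilityTheory.beta_eq_betaIntegralReal _ _ hβ hα,
    ProbabilityTheory.beta, Real.rpow_mul hxpos.le, Real.rpow_natCast] at hre
  rw [hre, show α * (k : ℝ) + 1 + α = α * (k + 1 : ℕ) + 1 by push_cast; ring]
  ring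

/-- The fractional Gronwall inequality with constant forcing `C`. -/
lemma fractional_gronwall {α c T C L : ℝ} (hα : 0 < α) (hL : 0 ≤ L) {e : ℝ → ℝ}
    (he : ContinuousOn e (Icc c T))
    (hineq : ∀ t ∈ Icc c T,
      e t ≤ C + L / Real.Gamma α * ∫ s in c..t, (t - s) ^ (α - 1) * e s) :
    ∀ t ∈ Icc c T, e t ≤ C * mittagLeffler α (L * (t - c) ^ α) := by
  obtain ⟨B, hB⟩ := isCompact_Icc.bddAbove_image he
  have hB' : ∀ s ∈ Icc c T, e s ≤ B := fun s hs => hB (mem_image_of_mem e hs)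
  set φ : ℕ → ℝ → ℝ := fun k s => (L * (s - c) ^ α) ^ k / Real.Gamma (α * k + 1) with hφ
  have hφc : ∀ k, Continuous (φ k) := by
    intro k
    have : Continuous fun s : ℝ => (s - c) ^ α :=
      (continuous_id.sub continuous_const).rpow_const fun _ => Or.inr hα.le
    simp only [hφ]
    fun_prop
  have hΓ : ∀ k : ℕ, Real.Gamma (α * k + 1) ≠ 0 := fun k =>
    (Real.Gamma_pos_of_pos (by positivity)).ne'
  have hΓα := Real.Gamma_pos_of_pos hα
  have hφI : ∀ (k : ℕ) (t : ℝ), c ≤ t →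
      L / Real.Gamma α * ∫ s in c..t, (t - s) ^ (α - 1) * φ k s = φ (k + 1) t := by
    intro k t ht
    have h1 : ∀ s, (t - s) ^ (α - 1) * φ k s = L ^ k / Real.Gamma (α * k + 1) *
        ((t - s) ^ (α - 1) * ((s - c) ^ α) ^ k) := by
      intro s; simp only [hφ, mul_pow]; ring
    simp_rw [h1]
    rw [intervalIntegral.integral_const_mul, integral_kernel_mul_pow hα ht]
    have := hΓ k
    have := hΓ (k + 1)
    simp only [hφ, mul_pow, pow_succ]
    field_simp
  have key : ∀ n : ℕ, ∀ t ∈ Icc c T, e t ≤ C * ∑ k ∈ Finset.range n, φ k t + B * φ n t := by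
    intro n
    induction n with
    | zero => intro t ht; simpa [hφ] using hB' t ht
    | succ n ih =>
      intro t ht
      have hint : ∀ k, IntervalIntegrable (fun s => (t - s) ^ (α - 1) * φ k s) volume c t :=
        fun k => intervalIntegrable_kernel_mul hα t ht.1 (hφc k).continuousOn
      have hsum : IntervalIntegrable
          (fun s => C * ∑ k ∈ Finset.range n, (t - s) ^ (α - 1) * φ k s) volume c t := by
        have := IntervalIntegrable.sum (Finset.range n) (fun k _ => hint k)
        simpa using this.const_mul C
      have hmono : ∫ s in c..t, (t - s) ^ (α - 1) * e s ≤
          ∫ s in c..t, (C * ∑ k ∈ Finset.range n, (t - s) ^ (α - 1) * φ k s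
            + B * ((t - s) ^ (α - 1) * φ n s)) := by
        refine integral_mono_on ht.1
          (intervalIntegrable_kernel_mul hα t ht.1 (he.mono (Icc_subset_Icc_right ht.2)))
          (hsum.add ((hint n).const_mul B)) fun s hs => ?_
        have h0 : 0 ≤ (t - s) ^ (α - 1) := Real.rpow_nonneg (sub_nonneg.2 hs.2) _
        have := mul_le_mul_of_nonneg_left (ih s ⟨hs.1, hs.2.trans ht.2⟩) h0
        rw [← Finset.mul_sum]
        linarith
      rw [intervalIntegral.integral_add hsum ((hint n).const_mul B),
        intervalIntegral.integral_const_mul, intervalIntegral.integral_const_mul,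
        intervalIntegral.integral_finsetSum fun k _ => hint k] at hmono
      have hφ0 : φ 0 t = 1 := by simp [hφ]
      calc e t ≤ C + L / Real.Gamma α * ∫ s in c..t, (t - s) ^ (α - 1) * e s := hineq t ht
        _ ≤ C + L / Real.Gamma α * (C * ∑ k ∈ Finset.range n,
              (∫ s in c..t, (t - s) ^ (α - 1) * φ k s)
              + B * ∫ s in c..t, (t - s) ^ (α - 1) * φ n s) := by gcongr
        _ = C + (C * ∑ k ∈ Finset.range n, L / Real.Gamma α *
              (∫ s in c..t, (t - s) ^ (α - 1) * φ k s)
              + B * (L / Real.Gamma α * ∫ s in c..t, (t - s) ^ (α - 1) * φ n s)) := by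
            rw [← Finset.mul_sum]; ring
        _ = _ := by
            simp_rw [hφI _ t ht.1]
            rw [Finset.sum_range_succ', hφ0]; ring
  intro t ht
  have hz : 0 ≤ L * (t - c) ^ α := mul_nonneg hL (Real.rpow_nonneg (sub_nonneg.2 ht.1) _)
  have hs := summable_mittagLeffler hα hz
  have hlim := (hs.hasSum.tendsto_sum_nat.const_mul C).add
    (hs.tendsto_atTop_zero.const_mul B)
  rw [mul_zero, add_zero] at hlim
  exact ge_of_tendsto' hlim fun n => key n t ht

/-- The memory accumulated on `[a, b]` and felt at a time `t ≥ b`. -/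
lemma abs_integral_kernel_mul_le {α a b t M : ℝ} (hα0 : 0 < α) (hα1 : α ≤ 1) (hab : a ≤ b)
    (hbt : b ≤ t) {g : ℝ → ℝ} (hM : 0 ≤ M) (hg : ∀ s ∈ Icc a b, |g s| ≤ M) :
    |∫ s in a..b, (t - s) ^ (α - 1) * g s| ≤ M * ((b - a) ^ α / α) := by
  have h1 : |∫ s in a..b, (t - s) ^ (α - 1) * g s| ≤ ∫ s in a..b, M * (t - s) ^ (α - 1) := by
    rw [← Real.norm_eq_abs]
    refine norm_integral_le_of_norm_le hab (ae_of_all _ fun s hs => ?_)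
      ((intervalIntegrable_kernel hα0 t a b).const_mul M)
    have h0 : 0 ≤ (t - s) ^ (α - 1) := Real.rpow_nonneg (sub_nonneg.2 (hs.2.trans hbt)) _
    rw [Real.norm_eq_abs, abs_mul, abs_of_nonneg h0, mul_comm]
    exact mul_le_mul_of_nonneg_right (hg s ⟨hs.1.le, hs.2⟩) h0
  rw [intervalIntegral.integral_const_mul, integral_kernel hα0] at h1
  refine h1.trans ?_
  have hsub : (t - a) ^ α ≤ (b - a) ^ α + (t - b) ^ α := by
    have := Real.rpow_add_le_add_rpow (p := α) (sub_nonneg.2 hab) (sub_nonneg.2 hbt) hα0.le hα1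
    rwa [show b - a + (t - b) = t - a by ring] at this
  gcongr
  linarith

theorem stmt11 (α a a' T y₀ M L : ℝ) (f : ℝ → ℝ → ℝ) (y y' : ℝ → ℝ)
    (hα0 : 0 < α) (hα1 : α ≤ 1) (h1 : a ≤ a') (h2 : a' < T)
    (hfcont : ContinuousOn (fun p : ℝ × ℝ => f p.1 p.2) (Set.Icc a T ×ˢ Set.univ))
    (hfbdd : ∀ t ∈ Set.Icc a T, ∀ x : ℝ, |f t x| ≤ M)
    (hflip : ∀ t ∈ Set.Icc a T, ∀ x₁ x₂ : ℝ, |f t x₁ - f t x₂| ≤ L * |x₁ - x₂|)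
    (hycont : ContinuousOn y (Set.Icc a T))
    (hy'cont : ContinuousOn y' (Set.Icc a' T))
    (hy : ∀ t ∈ Set.Icc a T,
      y t = y₀ + (1 / Real.Gamma α) * ∫ s in a..t, (t - s) ^ (α - 1) * f s (y s))
    (hy' : ∀ t ∈ Set.Icc a' T,
      y' t = y₀ + (1 / Real.Gamma α) * ∫ s in a'..t, (t - s) ^ (α - 1) * f s (y' s)) :
    ∀ t ∈ Set.Icc a' T,
      |y t - y' t| ≤ (M / Real.Gamma (α + 1)) * (a' - a) ^ α
        * mittagLeffler α (L * (T - a) ^ α) := by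
  have hΓα := Real.Gamma_pos_of_pos hα0
  have haT : a ∈ Icc a T := ⟨le_rfl, h1.trans h2.le⟩
  have hM : 0 ≤ M := (abs_nonneg _).trans (hfbdd a haT 0)
  have hL : 0 ≤ L := by
    have := (abs_nonneg _).trans (hflip a haT 1 0)
    simpa using this
  have hsub : Icc a' T ⊆ Icc a T := Icc_subset_Icc_left h1
  -- Continuity of the forcing terms, which the linearity of the integral relies on.
  have hF : ContinuousOn (fun s => f s (y s)) (Icc a T) :=
    hfcont.comp (continuousOn_id.prodMk hycont) fun s hs => ⟨hs, mem_univ _⟩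
  have hF' : ContinuousOn (fun s => f s (y' s)) (Icc a' T) :=
    hfcont.comp (continuousOn_id.prodMk hy'cont) fun s hs => ⟨hsub hs, mem_univ _⟩
  have he : ContinuousOn (fun s => |y s - y' s|) (Icc a' T) :=
    ((hycont.mono hsub).sub hy'cont).abs
  have hC : 0 ≤ M / Real.Gamma (α + 1) * (a' - a) ^ α :=
    mul_nonneg (div_nonneg hM (Real.Gamma_pos_of_pos (by linarith)).le)
      (Real.rpow_nonneg (sub_nonneg.2 h1) _)
  have hineq : ∀ t ∈ Icc a' T, |y t - y' t| ≤ M / Real.Gamma (α + 1) * (a' - a) ^ α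
      + L / Real.Gamma α * ∫ s in a'..t, (t - s) ^ (α - 1) * |y s - y' s| := by
    intro t ht
    have i1 : IntervalIntegrable (fun s => (t - s) ^ (α - 1) * f s (y s)) volume a a' :=
      intervalIntegrable_kernel_mul hα0 t h1 (hF.mono (Icc_subset_Icc_right h2.le))
    have i2 : IntervalIntegrable (fun s => (t - s) ^ (α - 1) * f s (y s)) volume a' t :=
      intervalIntegrable_kernel_mul hα0 t ht.1 (hF.mono (Icc_subset_Icc h1 ht.2))
    have i3 : IntervalIntegrable (fun s => (t - s) ^ (α - 1) * f s (y' s)) volume a' t :=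
      intervalIntegrable_kernel_mul hα0 t ht.1 (hF'.mono (Icc_subset_Icc_right ht.2))
    have i4 : IntervalIntegrable (fun s => (t - s) ^ (α - 1) * |y s - y' s|) volume a' t :=
      intervalIntegrable_kernel_mul hα0 t ht.1 (he.mono (Icc_subset_Icc_right ht.2))
    have hdiff : y t - y' t = 1 / Real.Gamma α *
        ((∫ s in a..a', (t - s) ^ (α - 1) * f s (y s))
        + ∫ s in a'..t, ((t - s) ^ (α - 1) * f s (y s) - (t - s) ^ (α - 1) * f s (y' s))) := by
      rw [hy t (hsub ht), hy' t ht, intervalIntegral.integral_sub i2 i3,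
        ← integral_add_adjacent_intervals i1 i2]
      ring
    have b1 := abs_integral_kernel_mul_le (t := t) hα0 hα1 h1 ht.1 (g := fun s => f s (y s)) hM
      fun s hs => hfbdd s ⟨hs.1, hs.2.trans h2.le⟩ _
    have b2 : |∫ s in a'..t, ((t - s) ^ (α - 1) * f s (y s) - (t - s) ^ (α - 1) * f s (y' s))|
        ≤ ∫ s in a'..t, L * ((t - s) ^ (α - 1) * |y s - y' s|) := by
      rw [← Real.norm_eq_abs]
      refine norm_integral_le_of_norm_le ht.1 (ae_of_all _ fun s hs => ?_) (i4.const_mul L)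
      have h0 : 0 ≤ (t - s) ^ (α - 1) := Real.rpow_nonneg (sub_nonneg.2 hs.2) _
      rw [← mul_sub, Real.norm_eq_abs, abs_mul, abs_of_nonneg h0, mul_left_comm]
      exact mul_le_mul_of_nonneg_left
        (hflip s (hsub ⟨hs.1.le, hs.2.trans ht.2⟩) _ _) h0
    rw [intervalIntegral.integral_const_mul] at b2
    rw [hdiff, abs_mul, abs_of_pos (one_div_pos.2 hΓα)]
    calc _ ≤ 1 / Real.Gamma α * (M * ((a' - a) ^ α / α)
            + L * ∫ s in a'..t, (t - s) ^ (α - 1) * |y s - y' s|) := by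
          gcongr
          exact (abs_add_le _ _).trans (add_le_add b1 b2)
      _ = _ := by
          rw [Real.Gamma_add_one hα0.ne']
          field_simp
  intro t ht
  have hta : 0 ≤ t - a' := sub_nonneg.2 ht.1
  refine (fractional_gronwall hα0 hL he hineq t ht).trans
    (mul_le_mul_of_nonneg_left (mittagLeffler_mono hα0 (by positivity) ?_) hC)
  gcongr
  exact ht.2
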